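/- Let Ω ⊂ ℝ² be a nonempty bounded open simply connected set and A = (A₁,A₂) a vector potential with A₁, A₂ smooth on a neighborhood of the closure of Ω, whose magnetic field B = ∂₁A₂ − ∂₂A₁ does not vanish identically on Ω. Then there exists ε > 0 (depending on B and Ω) such that for every h > 0 the lowest Dirichlet Pauli eigenvalue satisfies λ_{P₋}(h) ≥ λ^D(Ω) · h² · exp(−ε/h). -/

import Mathlib

/-!
Let `D₁ + iD₂ = h(∂₁ + i∂₂) - i(A₁ + iA₂)` be the magnetic Cauchy–Riemann operator. On test
functions the cross terms of `|D₁u + iD₂u|²` integrate, by parts, to exactly the magnetic field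
term, so that `Q_h(u) = ∫ |D₁u + iD₂u|²`.

After cutting off the potential away from `Ω`, the Cauchy transform solves the equation
`(∂₁ + i∂₂)g = i(A₁ + iA₂)` on `Ω` with a smooth `g` on the whole plane. Writing `u = e^{g/h} v`
gives `D₁u + iD₂u = e^{g/h} h(∂₁ + i∂₂)v`, and `∫ |(∂₁ + i∂₂)v|² = ∫ |∇v|²` because `v` has compact
support. If `|Re g| ≤ C` on `Ω`, comparing `|u|²` with `|v|²` and removing the weight `|e^{g/h}|²`
cost a factor `e^{-2C/h}` each, which leads to `ε = 4C`.
-/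

open MeasureTheory Filter Topology

noncomputable section

abbrev E2 : Type := EuclideanSpace ℝ (Fin 2)

/-- Partial derivative of a complex-valued function in the `i`-th coordinate direction. -/
def pdC (i : Fin 2) (f : E2 → ℂ) (x : E2) : ℂ :=
  fderiv ℝ f x (EuclideanSpace.single i 1)

/-- Partial derivative of a real-valued function in the `i`-th coordinate direction. -/
def pdR (i : Fin 2) (f : E2 → ℝ) (x : E2) : ℝ :=
  fderiv ℝ f x (EuclideanSpace.single i 1)

/-- The Laplacian `Δf = ∂₁²f + ∂₂²f`. -/
def lapl (f : E2 → ℝ) (x : E2) : ℝ :=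
  pdR 0 (pdR 0 f) x + pdR 1 (pdR 1 f) x

/-- The Pauli quadratic form
`Q_h(u) = ∫_Ω (|h∂₁u − iA₁u|² + |h∂₂u − iA₂u|²) dx − h∫_Ω B|u|² dx`. -/
def pauliQ (Ω : Set E2) (A₁ A₂ B : E2 → ℝ) (h : ℝ) (u : E2 → ℂ) : ℝ :=
  (∫ x in Ω, (‖(h : ℂ) * pdC 0 u x - Complex.I * (A₁ x : ℂ) * u x‖ ^ 2
      + ‖(h : ℂ) * pdC 1 u x - Complex.I * (A₂ x : ℂ) * u x‖ ^ 2))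
    - h * ∫ x in Ω, B x * ‖u x‖ ^ 2

/-- `u ∈ C_c^∞(Ω; ℂ)`. -/
def IsCptSmoothIn (Ω : Set E2) (u : E2 → ℂ) : Prop :=
  ContDiff ℝ (⊤ : ℕ∞) u ∧ HasCompactSupport u ∧ tsupport u ⊆ Ω

/-- The lowest Dirichlet Pauli eigenvalue
`λ_{P₋}(h) = inf { Q_h(u)/∫_Ω|u|² : 0 ≠ u ∈ C_c^∞(Ω;ℂ) }`. -/
def lambdaP (Ω : Set E2) (A₁ A₂ B : E2 → ℝ) (h : ℝ) : ℝ :=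
  sInf { r | ∃ u : E2 → ℂ, IsCptSmoothIn Ω u ∧ u ≠ 0 ∧
    r = pauliQ Ω A₁ A₂ B h u / ∫ x in Ω, ‖u x‖ ^ 2 }

/-- The lowest Dirichlet eigenvalue of the Laplacian on `Ω`. -/
def lambdaD (Ω : Set E2) : ℝ :=
  sInf { r | ∃ v : E2 → ℂ, IsCptSmoothIn Ω v ∧ v ≠ 0 ∧
    r = (∫ x in Ω, (‖pdC 0 v x‖ ^ 2 + ‖pdC 1 v x‖ ^ 2)) / ∫ x in Ω, ‖v x‖ ^ 2 }

section IntegrationByParts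

variable {E F G W : Type*} [NormedAddCommGroup F] [NormedAddCommGroup G]

lemma integrable_of_forall_notMem_tsupport [TopologicalSpace E] [MeasurableSpace E]
    [OpensMeasurableSpace E] {μ : Measure E} [IsFiniteMeasureOnCompacts μ] {f : E → F} {u : E → G}
    (hf : Continuous f) (hu : HasCompactSupport u) (h0 : ∀ x ∉ tsupport u, f x = 0) :
    Integrable f μ :=
  hf.integrable_of_hasCompactSupport (hu.mono' (Function.support_subset_iff'.mpr h0))

variable [NormedAddCommGroup E] [NormedSpace ℝ E] [NormedSpace ℝ F] [NormedSpace ℝ G]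
  [NormedAddCommGroup W] [NormedSpace ℝ W] [FiniteDimensional ℝ E] [MeasurableSpace E]
  [BorelSpace E] (μ : Measure E) [μ.IsAddHaarMeasure]

lemma integral_bilinear_fderiv_right_eq_neg_left_of_contDiff (B : F →L[ℝ] G →L[ℝ] W) {f : E → F}
    {g : E → G} (hf : ContDiff ℝ 1 f) (hg : ContDiff ℝ 1 g) (hc : HasCompactSupport g) (v : E) :
    ∫ x, B (f x) (fderiv ℝ g x v) ∂μ = -∫ x, B (fderiv ℝ f x v) (g x) ∂μ := by
  have hfc := hf.continuous
  have hgc := hg.continuous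
  have : Continuous fun x => fderiv ℝ f x v :=
    (hf.continuous_fderiv one_ne_zero).clm_apply continuous_const
  have : Continuous fun x => fderiv ℝ g x v :=
    (hg.continuous_fderiv one_ne_zero).clm_apply continuous_const
  refine integral_bilinear_fderiv_right_eq_neg_left_of_integrable
    (integrable_of_forall_notMem_tsupport (by fun_prop) hc fun x hx => ?_)
    (integrable_of_forall_notMem_tsupport (by fun_prop) hc fun x hx => ?_)
    (integrable_of_forall_notMem_tsupport (by fun_prop) hc fun x hx => ?_)
    (fun x _ => hf.differentiable one_ne_zero x) (fun x _ => hg.differentiable one_ne_zero x)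
  · simp [image_eq_zero_of_notMem_tsupport hx]
  · simp [fderiv_of_notMem_tsupport ℝ hx]
  · simp [image_eq_zero_of_notMem_tsupport hx]

/-- Integrating by parts in either factor leads to the same integral, once with each sign. -/
lemma integral_alternating_fderiv_eq_zero {B : F →L[ℝ] F →L[ℝ] W} (hB : ∀ x y, B x y = -B y x)
    {u : E → F} (hu : ContDiff ℝ 2 u) (hc : HasCompactSupport u) (v w : E) :
    ∫ x, B (fderiv ℝ u x v) (fderiv ℝ u x w) ∂μ = 0 := by
  have hu1 : ContDiff ℝ 1 u := hu.of_le one_le_two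
  have hu' : ContDiff ℝ 1 (fderiv ℝ u) := hu.fderiv_right (by norm_num)
  have hdir (v : E) : ContDiff ℝ 1 fun x => fderiv ℝ u x v := hu'.clm_apply contDiff_const
  have hsecond (v w x : E) :
      fderiv ℝ (fun y => fderiv ℝ u y v) x w = fderiv ℝ (fderiv ℝ u) x w v := by
    rw [fderiv_clm_apply (hu'.differentiable one_ne_zero x) (differentiableAt_const v)]
    simp
  have hsymm (x : E) : fderiv ℝ (fderiv ℝ u) x w v = fderiv ℝ (fderiv ℝ u) x v w :=
    hu.contDiffAt.isSymmSndFDerivAt (by simp) w v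
  have hright : ∫ x, B (fderiv ℝ u x v) (fderiv ℝ u x w) ∂μ
      = -∫ x, B (fderiv ℝ (fderiv ℝ u) x v w) (u x) ∂μ := by
    rw [integral_bilinear_fderiv_right_eq_neg_left_of_contDiff μ B (hdir v) hu1 hc w]
    simp only [hsecond, hsymm]
  have hleft : ∫ x, B (fderiv ℝ u x v) (fderiv ℝ u x w) ∂μ
      = ∫ x, B (fderiv ℝ (fderiv ℝ u) x v w) (u x) ∂μ := by
    rw [← neg_eq_iff_eq_neg.mpr (integral_bilinear_fderiv_right_eq_neg_left_of_contDiff μ B hu1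
      (hdir w) (hc.fderiv_apply ℝ w) v), ← integral_neg]
    simp only [hsecond, ← hB]
  have : IsAddTorsionFree W := .of_isTorsionFree ℝ W
  rw [hleft] at hright ⊢
  exact self_eq_neg.mp hright

end IntegrationByParts

section Extension

variable {E F : Type*} [NormedAddCommGroup E] [NormedSpace ℝ E] [FiniteDimensional ℝ E]
  [NormedAddCommGroup F] [NormedSpace ℝ F]

lemma exists_contDiff_hasCompactSupport_eventuallyEq {n : ℕ∞} {K U : Set E} (hK : IsCompact K)
    (hU : IsOpen U) (hKU : K ⊆ U) {f : E → F} (hf : ContDiffOn ℝ n f U) :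
    ∃ f' : E → F, ContDiff ℝ n f' ∧ HasCompactSupport f' ∧ f' =ᶠ[𝓝ˢ K] f := by
  obtain ⟨L, hL, hKL, hLU⟩ := exists_compact_between hK hU hKU
  obtain ⟨ψ, hψ1, hψ0, -⟩ := exists_contMDiffMap_one_nhds_of_subset_interior (n := n)
    (modelWithCornersSelf ℝ E) hK.isClosed hKL
  have hψL : tsupport (fun x => ψ x • f x) ⊆ L := by
    refine closure_minimal (Function.support_subset_iff'.mpr fun x hx => ?_) hL.isClosed
    rw [hψ0 x hx, zero_smul]
  refine ⟨fun x => ψ x • f x, contMDiff_iff_contDiff.mp (contMDiff_of_tsupport fun x hx => ?_),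
    HasCompactSupport.of_support_subset_isCompact hL (subset_closure.trans hψL), ?_⟩
  · exact (ψ.contMDiff.contDiff.contDiffAt.smul
      (hf.contDiffAt (hU.mem_nhds (hLU (hψL hx))))).contMDiffAt
  · filter_upwards [hψ1] with x hx
    rw [hx, one_smul]

end Extension

section CauchyTransform

open Complex Convolution
open scoped Real ComplexConjugate
open Real (pi_pos)

variable {F : Type*} [NormedAddCommGroup F] [NormedSpace ℂ F]

/-- The Cauchy–Riemann operator `∂₁ + i∂₂` on functions of a complex variable, which is twice the
Wirtinger derivative `∂/∂z̄`. -/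
def dbar (f : ℂ → F) (z : ℂ) : F :=
  fderiv ℝ f z 1 + I • fderiv ℝ f z I

/-- With `e = e^{iθ}` this writes `∂₁ + i∂₂` as `e^{iθ} (∂_r + (i/r) ∂_θ)`. -/
lemma map_add_I_smul_map_mul_I (L : ℂ →L[ℝ] F) (e : ℂ) :
    L e + I • L (e * I) = conj e • (L 1 + I • L I) := by
  have he : e = e.re • (1 : ℂ) + e.im • I := by simp
  have heI : e * I = (-e.im) • (1 : ℂ) + e.re • I := by apply Complex.ext <;> simp
  have hconj : conj e = e.re - e.im * I := by apply Complex.ext <;> simp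
  rw [heI, hconj]
  nth_rw 1 [he]
  simp only [map_add, map_smul]
  simp only [← coe_smul, ofReal_neg]
  match_scalars
  · ring
  · linear_combination (e.im : ℂ) * I_sq

lemma smul_inv_smul_dbar_smul (f : ℂ → F) {r : ℝ} (hr : r ≠ 0) {e : ℂ} (he : ‖e‖ = 1) :
    r • (r • e)⁻¹ • dbar f (r • e) = fderiv ℝ f (r • e) e + I • fderiv ℝ f (r • e) (e * I) := by
  rw [map_add_I_smul_map_mul_I, ← inv_eq_conj he, ← smul_assoc, smul_inv₀, smul_inv_smul₀ hr, dbar]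

lemma integral_Ioi_fderiv_smul {E G : Type*} [NormedAddCommGroup E] [NormedSpace ℝ E]
    [NormedAddCommGroup G] [NormedSpace ℝ G] [CompleteSpace G] {f : E → G} (hf : ContDiff ℝ 1 f)
    (hc : HasCompactSupport f) {v : E} (hv : v ≠ 0) :
    ∫ r in Set.Ioi (0 : ℝ), fderiv ℝ f (r • v) v = -f 0 := by
  have hray : Topology.IsClosedEmbedding fun r : ℝ => r • v := isClosedEmbedding_smul_left hv
  have hderiv (r : ℝ) : deriv (fun r : ℝ => f (r • v)) r = fderiv ℝ f (r • v) v := by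
    have hsmul : HasDerivAt (fun r : ℝ => r • v) v r := by
      simpa using (hasDerivAt_id r).smul_const v
    exact ((hf.differentiable one_ne_zero _).hasFDerivAt.comp_hasDerivAt r hsmul).deriv
  have hft := (hc.comp_isClosedEmbedding hray).integral_Ioi_deriv_eq
    (hf.comp (contDiff_id.smul contDiff_const)) 0
  simpa [Function.comp_def, hderiv] using! hft

lemma integral_fderiv_circleMap [CompleteSpace F] {f : ℂ → F} (hf : ContDiff ℝ 1 f) (c : ℂ)
    (r : ℝ) :
    ∫ θ in -π..π, fderiv ℝ f (circleMap c r θ) (circleMap 0 r θ * I) = 0 := by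
  have hderiv (θ : ℝ) : HasDerivAt (f ∘ circleMap c r)
      (fderiv ℝ f (circleMap c r θ) (circleMap 0 r θ * I)) θ :=
    (hf.differentiable one_ne_zero _).hasFDerivAt.comp_hasDerivAt θ (hasDerivAt_circleMap c r θ)
  have hcont : Continuous fun θ => fderiv ℝ f (circleMap c r θ) (circleMap 0 r θ * I) :=
    ((hf.continuous_fderiv one_ne_zero).comp (continuous_circleMap c r)).clm_apply
      ((continuous_circleMap 0 r).mul continuous_const)
  rw [intervalIntegral.integral_eq_sub_of_hasDerivAt (fun θ _ => hderiv θ)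
    (hcont.intervalIntegrable _ _), sub_eq_zero]
  have hper := periodic_circleMap c r (-π)
  rw [show -π + 2 * π = π by ring] at hper
  rw [Function.comp_apply, Function.comp_apply, hper]

lemma integrableOn_Ioi_prod_Ioo {G : Type*} [NormedAddCommGroup G] {f : ℝ × ℝ → G}
    (hf : Continuous f) {R : ℝ} (hR : ∀ p, R < p.1 → f p = 0) (a b c : ℝ) :
    IntegrableOn f (Set.Ioi a ×ˢ Set.Ioo b c) := by
  have hcompact : IntegrableOn f (Set.Icc a R ×ˢ Set.Icc b c) :=
    hf.continuousOn.integrableOn_compact (isCompact_Icc.prod isCompact_Icc)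
  refine hcompact.of_forall_sdiff_eq_zero (measurableSet_Ioi.prod measurableSet_Ioo) ?_
  rintro ⟨r, θ⟩ ⟨⟨hr, hθ⟩, hn⟩
  refine hR _ (lt_of_not_ge fun hrR => hn ⟨⟨?_, hrR⟩, Set.Ioo_subset_Icc_self hθ⟩)
  exact le_of_lt hr

lemma integrableOn_fderiv_smul_circleMap {f : ℂ → F} (hf : ContDiff ℝ 1 f)
    (hc : HasCompactSupport f) (v : ℂ) :
    IntegrableOn (fun p : ℝ × ℝ =>
      fderiv ℝ f (p.1 • circleMap 0 1 p.2) (circleMap 0 1 p.2 * v))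
      (Set.Ioi 0 ×ˢ Set.Ioo (-π) π) := by
  have : Continuous (circleMap 0 1) := continuous_circleMap 0 1
  obtain ⟨R, hR⟩ := hc.isCompact.isBounded.exists_norm_le
  refine integrableOn_Ioi_prod_Ioo (((hf.continuous_fderiv one_ne_zero).comp
    (by fun_prop)).clm_apply (by fun_prop)) (R := R) (fun p hp => ?_) _ _ _
  have hnotMem : p.1 • circleMap 0 1 p.2 ∉ tsupport f := fun hmem =>
    (hR _ hmem).not_gt (hp.trans_le ((le_abs_self _).trans_eq (by simp)))
  rw [Function.comp_apply, fderiv_of_notMem_tsupport ℝ hnotMem, zero_apply]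

lemma setIntegral_fderiv_smul_circleMap_radial [CompleteSpace F] {f : ℂ → F}
    (hf : ContDiff ℝ 1 f) (hc : HasCompactSupport f) :
    ∫ p in Set.Ioi (0 : ℝ) ×ˢ Set.Ioo (-π) π,
      fderiv ℝ f (p.1 • circleMap 0 1 p.2) (circleMap 0 1 p.2) = -((2 * π) • f 0) := by
  have hswap : IntegrableOn (fun p : ℝ × ℝ =>
      fderiv ℝ f (p.swap.1 • circleMap 0 1 p.swap.2) (circleMap 0 1 p.swap.2))
      (Set.Ioo (-π) π ×ˢ Set.Ioi 0) := by
    simpa only [mul_one] using! (integrableOn_fderiv_smul_circleMap hf hc 1).swap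
  have hray (θ : ℝ) :
      ∫ r in Set.Ioi (0 : ℝ), fderiv ℝ f (r • circleMap 0 1 θ) (circleMap 0 1 θ) = -f 0 :=
    integral_Ioi_fderiv_smul hf hc (circleMap_ne_center one_ne_zero)
  rw [Measure.volume_eq_prod, ← setIntegral_prod_swap, setIntegral_prod _ hswap]
  simp only [Prod.fst_swap, Prod.snd_swap, hray]
  simp [two_mul, pi_pos.le]

lemma setIntegral_fderiv_smul_circleMap_angular [CompleteSpace F] {f : ℂ → F}
    (hf : ContDiff ℝ 1 f) (hc : HasCompactSupport f) :
    ∫ p in Set.Ioi (0 : ℝ) ×ˢ Set.Ioo (-π) π,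
      fderiv ℝ f (p.1 • circleMap 0 1 p.2) (circleMap 0 1 p.2 * I) = 0 := by
  rw [Measure.volume_eq_prod, setIntegral_prod _ (integrableOn_fderiv_smul_circleMap hf hc I)]
  refine setIntegral_eq_zero_of_forall_eq_zero fun r hr => ?_
  have hcircle := integral_fderiv_circleMap hf 0 r
  have hscale (θ : ℝ) : circleMap 0 r θ = r • circleMap 0 1 θ := by simp [circleMap]
  simp only [hscale, smul_mul_assoc, map_smul] at hcircle
  rwa [intervalIntegral.integral_smul, intervalIntegral.integral_of_le (by linarith [pi_pos]),
    integral_Ioc_eq_integral_Ioo, smul_eq_zero_iff_right (ne_of_gt hr)] at hcircle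

/-- The Cauchy–Pompeiu formula at the origin, for compactly supported functions. -/
lemma integral_inv_smul_dbar [CompleteSpace F] {f : ℂ → F} (hf : ContDiff ℝ 1 f)
    (hc : HasCompactSupport f) : ∫ w, w⁻¹ • dbar f w = -((2 * π) • f 0) := by
  have hpolar (p : ℝ × ℝ) (hp : p ∈ Set.Ioi (0 : ℝ) ×ˢ Set.Ioo (-π) π) :
      p.1 • ((Complex.polarCoord.symm p)⁻¹ • dbar f (Complex.polarCoord.symm p))
        = fderiv ℝ f (p.1 • circleMap 0 1 p.2) (circleMap 0 1 p.2)
          + I • fderiv ℝ f (p.1 • circleMap 0 1 p.2) (circleMap 0 1 p.2 * I) := by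
    have hr : p.1 ≠ 0 := ne_of_gt hp.1
    have hsymm : Complex.polarCoord.symm p = p.1 • circleMap 0 1 p.2 := by
      simp [Complex.polarCoord_symm_apply, circleMap, exp_mul_I, mul_add]
    rw [hsymm, smul_inv_smul_dbar_smul f hr (by simp)]
  have hradial : IntegrableOn (fun p : ℝ × ℝ =>
      fderiv ℝ f (p.1 • circleMap 0 1 p.2) (circleMap 0 1 p.2))
      (Set.Ioi 0 ×ˢ Set.Ioo (-π) π) := by
    simpa only [mul_one] using integrableOn_fderiv_smul_circleMap hf hc 1
  have hangular : IntegrableOn (fun p : ℝ × ℝ =>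
      I • fderiv ℝ f (p.1 • circleMap 0 1 p.2) (circleMap 0 1 p.2 * I))
      (Set.Ioi 0 ×ˢ Set.Ioo (-π) π) :=
    (integrableOn_fderiv_smul_circleMap hf hc I).smul I
  rw [← Complex.integral_comp_polarCoord_symm, polarCoord_target,
    setIntegral_congr_fun (measurableSet_Ioi.prod measurableSet_Ioo) hpolar,
    integral_add hradial hangular, integral_smul, setIntegral_fderiv_smul_circleMap_radial hf hc,
    setIntegral_fderiv_smul_circleMap_angular hf hc, smul_zero, add_zero]

lemma locallyIntegrable_inv : LocallyIntegrable fun w : ℂ => w⁻¹ := by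
  refine locallyIntegrable_of_norm_le_rpow (C := 1) (α := 1) (by simp) (by simp)
    (Eventually.of_forall fun w => ?_) measurable_inv.aestronglyMeasurable
  rw [norm_inv, Real.rpow_neg_one, one_mul]

/-- The Cauchy transform: convolution with `1 / (2πw)`, the fundamental solution of `dbar`. -/
def cauchyTransform (a : ℂ → F) (z : ℂ) : F :=
  (2 * π)⁻¹ • ((fun w : ℂ => w⁻¹) ⋆[ContinuousLinearMap.lsmul ℝ ℂ] a) z

lemma contDiff_cauchyTransform {n : ℕ∞} {a : ℂ → F} (ha : ContDiff ℝ n a)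
    (hc : HasCompactSupport a) : ContDiff ℝ n (cauchyTransform a) :=
  contDiff_const.smul (hc.contDiff_convolution_right _ locallyIntegrable_inv ha)

lemma fderiv_cauchyTransform {a : ℂ → F} (ha : ContDiff ℝ 1 a) (hc : HasCompactSupport a)
    (z v : ℂ) :
    fderiv ℝ (cauchyTransform a) z v = cauchyTransform (fun w => fderiv ℝ a w v) z := by
  have hconv := hc.hasFDerivAt_convolution_right (ContinuousLinearMap.lsmul ℝ ℂ)
    locallyIntegrable_inv ha z
  have h := (hconv.const_smul (2 * π)⁻¹).fderiv
  refine (DFunLike.congr_fun h v).trans ?_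
  rw [cauchyTransform, smul_apply, convolution_precompR_apply _ locallyIntegrable_inv
    (hc.fderiv ℝ) (ha.continuous_fderiv one_ne_zero)]

lemma dbar_cauchyTransform_eq_cauchyTransform_dbar {a : ℂ → F} (ha : ContDiff ℝ 1 a)
    (hc : HasCompactSupport a) (z : ℂ) :
    dbar (cauchyTransform a) z = cauchyTransform (dbar a) z := by
  have hint (v : ℂ) : Integrable fun w : ℂ => w⁻¹ • fderiv ℝ a (z - w) v :=
    (hc.fderiv_apply ℝ v).convolutionExists_right (ContinuousLinearMap.lsmul ℝ ℂ)
      locallyIntegrable_inv ((ha.continuous_fderiv one_ne_zero).clm_apply continuous_const) z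
  have hintI : Integrable fun w : ℂ => I • w⁻¹ • fderiv ℝ a (z - w) I := (hint I).smul I
  rw [dbar, fderiv_cauchyTransform ha hc, fderiv_cauchyTransform ha hc]
  simp only [cauchyTransform, convolution, ContinuousLinearMap.lsmul_apply, dbar, smul_add]
  simp only [smul_comm _ I]
  rw [integral_add (hint 1) hintI, integral_smul, smul_add, smul_comm I]

lemma dbar_cauchyTransform [CompleteSpace F] {a : ℂ → F} (ha : ContDiff ℝ 1 a)
    (hc : HasCompactSupport a) (z : ℂ) :
    dbar (cauchyTransform a) z = a z := by
  have hreflect : dbar (fun w => a (z - w)) = fun w => -dbar a (z - w) := by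
    ext w
    have hderiv := (ha.differentiable one_ne_zero (z - w)).hasFDerivAt.comp w
      ((hasFDerivAt_id w).const_sub z)
    have hfderiv : fderiv ℝ (fun w => a (z - w)) w = _ := hderiv.fderiv
    simp [dbar, hfderiv, add_comm]
  have hpompeiu := integral_inv_smul_dbar (f := fun w => a (z - w)) (ha.comp (by fun_prop))
    (hc.comp_homeomorph (Homeomorph.subLeft z))
  rw [dbar_cauchyTransform_eq_cauchyTransform_dbar ha hc, cauchyTransform, convolution]
  simp only [hreflect, smul_neg, integral_neg, sub_zero, neg_inj] at hpompeiu
  simp only [ContinuousLinearMap.lsmul_apply, hpompeiu]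
  exact inv_smul_smul₀ (by positivity) _

end CauchyTransform

section CauchyRiemann

open Complex

variable {u v f : E2 → ℂ} {x : E2}

lemma continuous_pdC (hu : ContDiff ℝ 1 u) (i : Fin 2) : Continuous (pdC i u) :=
  (hu.continuous_fderiv one_ne_zero).clm_apply continuous_const

lemma pdC_of_notMem_tsupport (hx : x ∉ tsupport u) (i : Fin 2) : pdC i u x = 0 := by
  rw [pdC, fderiv_of_notMem_tsupport ℝ hx, zero_apply]

lemma pdC_exp_mul (hf : DifferentiableAt ℝ f x) (hv : DifferentiableAt ℝ v x) (i : Fin 2) :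
    pdC i (fun y => exp (f y) * v y) x = exp (f x) * (pdC i v x + pdC i f x * v x) := by
  rw [pdC, fderiv_fun_mul hf.cexp hv, hf.hasFDerivAt.cexp.fderiv]
  simp only [add_apply, smul_apply, smul_eq_mul, pdC]
  ring

/-- The Cauchy–Riemann operator `∂₁ + i∂₂` on functions on the Euclidean plane. -/
def dbarE2 (u : E2 → ℂ) (x : E2) : ℂ :=
  pdC 0 u x + I * pdC 1 u x

lemma dbarE2_div_const (g : E2 → ℂ) (c : ℂ) (x : E2) :
    dbarE2 (fun y => g y / c) x = dbarE2 g x / c := by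
  have hsmul : (fun y => g y / c) = c⁻¹ • g := by
    ext y
    simp [div_eq_inv_mul]
  simp only [dbarE2, pdC, hsmul, fderiv_const_smul_field, Pi.smul_apply, smul_apply, smul_eq_mul]
  ring

lemma dbarE2_comp_orthonormalBasisOneI_repr_symm {k : ℂ → ℂ} (hk : Differentiable ℝ k) (x : E2) :
    dbarE2 (fun y => k (orthonormalBasisOneI.repr.symm y)) x
      = dbar k (orthonormalBasisOneI.repr.symm x) := by
  have hpd (i : Fin 2) : pdC i (fun y => k (orthonormalBasisOneI.repr.symm y)) x
      = fderiv ℝ k (orthonormalBasisOneI.repr.symm x) (orthonormalBasisOneI i) := by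
    have hcomp := (hk _).hasFDerivAt.comp x
      orthonormalBasisOneI.repr.symm.toContinuousLinearEquiv.hasFDerivAt
    have hfderiv : fderiv ℝ (fun y => k (orthonormalBasisOneI.repr.symm y)) x = _ := hcomp.fderiv
    rw [pdC, hfderiv]
    simp
  simp only [dbarE2, hpd, dbar, coe_orthonormalBasisOneI]
  simp

lemma exists_contDiff_dbarE2_eq {n : ℕ∞} (hn : 1 ≤ n) {α : E2 → ℂ} (hα : ContDiff ℝ n α)
    (hc : HasCompactSupport α) : ∃ g : E2 → ℂ, ContDiff ℝ n g ∧ ∀ x, dbarE2 g x = α x := by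
  let e : ℂ ≃ₗᵢ[ℝ] E2 := orthonormalBasisOneI.repr
  have hαe : ContDiff ℝ n (α ∘ e) := hα.comp e.contDiff
  have hce : HasCompactSupport (α ∘ e) := hc.comp_homeomorph e.toHomeomorph
  have hk : ContDiff ℝ n (cauchyTransform (α ∘ e)) := contDiff_cauchyTransform hαe hce
  refine ⟨fun x => cauchyTransform (α ∘ e) (e.symm x), hk.comp e.symm.contDiff, fun x => ?_⟩
  rw [dbarE2_comp_orthonormalBasisOneI_repr_symm
    (hk.differentiable (by exact_mod_cast (zero_lt_one.trans_le hn).ne')),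
    dbar_cauchyTransform (hαe.of_le (by exact_mod_cast hn)) hce]
  exact congrArg α (e.apply_symm_apply x)

end CauchyRiemann

section MagneticCauchyRiemann

open Complex
open scoped ComplexConjugate

variable {a₁ a₂ : E2 → ℝ} {h : ℝ} {u v f : E2 → ℂ} {x : E2}

/-- The magnetic Cauchy–Riemann operator `D₁ + iD₂` with `D_j = h∂_j - ia_j`. -/
def magneticDbar (a₁ a₂ : E2 → ℝ) (h : ℝ) (u : E2 → ℂ) (x : E2) : ℂ :=
  h * dbarE2 u x - I * (a₁ x + I * a₂ x) * u x

lemma magneticDbar_of_notMem_tsupport (hx : x ∉ tsupport u) : magneticDbar a₁ a₂ h u x = 0 := by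
  simp [magneticDbar, dbarE2, pdC_of_notMem_tsupport hx, image_eq_zero_of_notMem_tsupport hx]

lemma integrable_sq_norm_magneticDbar (ha₁ : Continuous a₁) (ha₂ : Continuous a₂)
    (hu : ContDiff ℝ 1 u) (hc : HasCompactSupport u) :
    Integrable fun x => ‖magneticDbar a₁ a₂ h u x‖ ^ 2 := by
  have := hu.continuous
  have := continuous_pdC hu
  refine integrable_of_forall_notMem_tsupport ?_ hc fun x hx => ?_
  · unfold magneticDbar dbarE2
    fun_prop
  · rw [magneticDbar_of_notMem_tsupport hx, norm_zero, zero_pow two_ne_zero]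

/-- The zeroth order term is removed by an integrating factor. -/
lemma magneticDbar_exp_mul (hf : DifferentiableAt ℝ f x) (hv : DifferentiableAt ℝ v x)
    (hfa : h * dbarE2 f x = I * (a₁ x + I * a₂ x)) :
    magneticDbar a₁ a₂ h (fun y => exp (f y) * v y) x = exp (f x) * (h * dbarE2 v x) := by
  rw [magneticDbar, ← hfa, dbarE2, pdC_exp_mul hf hv, pdC_exp_mul hf hv, dbarE2, dbarE2]
  ring

lemma pdR_sq_norm (hu : DifferentiableAt ℝ u x) (i : Fin 2) :
    pdR i (fun y => ‖u y‖ ^ 2) x = 2 * (conj (u x) * pdC i u x).re := by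
  rw [pdR, hu.hasFDerivAt.norm_sq.fderiv]
  simp only [pdC, Complex.inner, smul_apply, ContinuousLinearMap.comp_apply, coe_innerSL_apply,
    nsmul_eq_mul, Nat.cast_ofNat, mul_comm]

lemma sq_norm_magneticDbar (hu : DifferentiableAt ℝ u x) :
    ‖magneticDbar a₁ a₂ h u x‖ ^ 2
      = (‖(h : ℂ) * pdC 0 u x - I * (a₁ x : ℂ) * u x‖ ^ 2
          + ‖(h : ℂ) * pdC 1 u x - I * (a₂ x : ℂ) * u x‖ ^ 2)
        + h * (a₂ x * pdR 0 (fun y => ‖u y‖ ^ 2) x - a₁ x * pdR 1 (fun y => ‖u y‖ ^ 2) x)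
        - 2 * h ^ 2 * (conj (pdC 0 u x) * pdC 1 u x).im := by
  rw [pdR_sq_norm hu, pdR_sq_norm hu]
  simp only [magneticDbar, dbarE2, Complex.sq_norm, normSq_apply, sub_re, sub_im, add_re, add_im,
    mul_re, mul_im, ofReal_re, ofReal_im, I_re, I_im, conj_re, conj_im]
  ring

lemma continuous_pdR {a : E2 → ℝ} (ha : ContDiff ℝ 1 a) (i : Fin 2) : Continuous (pdR i a) :=
  (ha.continuous_fderiv one_ne_zero).clm_apply continuous_const

lemma integrable_mul_sq_norm {b : E2 → ℝ} (hb : Continuous b) (hu : Continuous u)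
    (hc : HasCompactSupport u) : Integrable fun x => b x * ‖u x‖ ^ 2 :=
  integrable_of_forall_notMem_tsupport (by fun_prop) hc fun x hx => by
    simp [image_eq_zero_of_notMem_tsupport hx]

lemma integrable_mul_pdR_sq_norm {a : E2 → ℝ} (ha : Continuous a) (hu : ContDiff ℝ 1 u)
    (hc : HasCompactSupport u) (i : Fin 2) :
    Integrable fun x => a x * pdR i (fun y => ‖u y‖ ^ 2) x := by
  have := continuous_pdR (hu.norm_sq ℝ) i
  refine integrable_of_forall_notMem_tsupport (by fun_prop) hc fun x hx => ?_
  simp [pdR_sq_norm (hu.differentiable one_ne_zero x), image_eq_zero_of_notMem_tsupport hx]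

lemma integral_mul_pdR_sq_norm {a : E2 → ℝ} (ha : ContDiff ℝ 1 a) (hu : ContDiff ℝ 1 u)
    (hc : HasCompactSupport u) (i : Fin 2) :
    ∫ x, a x * pdR i (fun y => ‖u y‖ ^ 2) x = -∫ x, pdR i a x * ‖u x‖ ^ 2 :=
  integral_bilinear_fderiv_right_eq_neg_left_of_contDiff volume (ContinuousLinearMap.mul ℝ ℝ) ha
    (hu.norm_sq ℝ) (hc.mono' (Function.support_subset_iff'.mpr fun x hx => by
      simp [image_eq_zero_of_notMem_tsupport hx])) _

lemma integral_mul_pdR_sub_mul_pdR_sq_norm (ha₁ : ContDiff ℝ 1 a₁) (ha₂ : ContDiff ℝ 1 a₂)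
    (hu : ContDiff ℝ 1 u) (hc : HasCompactSupport u) :
    ∫ x, (a₂ x * pdR 0 (fun y => ‖u y‖ ^ 2) x - a₁ x * pdR 1 (fun y => ‖u y‖ ^ 2) x)
      = -∫ x, (pdR 0 a₂ x - pdR 1 a₁ x) * ‖u x‖ ^ 2 := by
  simp only [sub_mul]
  rw [integral_sub (integrable_mul_pdR_sq_norm ha₂.continuous hu hc 0)
      (integrable_mul_pdR_sq_norm ha₁.continuous hu hc 1),
    integral_sub (integrable_mul_sq_norm (continuous_pdR ha₂ 0) hu.continuous hc)
      (integrable_mul_sq_norm (continuous_pdR ha₁ 1) hu.continuous hc),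
    integral_mul_pdR_sq_norm ha₂ hu hc, integral_mul_pdR_sq_norm ha₁ hu hc]
  ring

lemma integral_im_conj_pdC_mul_pdC (hu : ContDiff ℝ 2 u) (hc : HasCompactSupport u) (i j : Fin 2) :
    ∫ x, (conj (pdC i u x) * pdC j u x).im = 0 := by
  let B : ℂ →L[ℝ] ℂ →L[ℝ] ℝ :=
    (ContinuousLinearMap.compL ℝ ℂ ℂ ℝ imCLM).comp
      ((ContinuousLinearMap.mul ℝ ℂ).comp (conjCLE : ℂ →L[ℝ] ℂ))
  have hB (z w : ℂ) : B z w = (conj z * w).im := rfl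
  refine integral_alternating_fderiv_eq_zero volume (B := B) (fun z w => ?_) hu hc _ _
  simp only [hB, mul_im, conj_re, conj_im]
  ring

lemma pauliQ_univ_eq_integral_sq_norm_magneticDbar (ha₁ : ContDiff ℝ 1 a₁)
    (ha₂ : ContDiff ℝ 1 a₂) (h : ℝ) (hu : ContDiff ℝ 2 u) (hc : HasCompactSupport u) :
    pauliQ Set.univ a₁ a₂ (fun x => pdR 0 a₂ x - pdR 1 a₁ x) h u
      = ∫ x, ‖magneticDbar a₁ a₂ h u x‖ ^ 2 := by
  have hu1 : ContDiff ℝ 1 u := hu.of_le one_le_two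
  have hpd := continuous_pdC hu1
  have hD : Integrable fun x => ‖(h : ℂ) * pdC 0 u x - I * (a₁ x : ℂ) * u x‖ ^ 2
      + ‖(h : ℂ) * pdC 1 u x - I * (a₂ x : ℂ) * u x‖ ^ 2 := by
    have := hu1.continuous
    have := ha₁.continuous
    have := ha₂.continuous
    refine integrable_of_forall_notMem_tsupport (by fun_prop) hc fun x hx => ?_
    simp [pdC_of_notMem_tsupport hx, image_eq_zero_of_notMem_tsupport hx]
  have hdiv : Integrable fun x => h * (a₂ x * pdR 0 (fun y => ‖u y‖ ^ 2) x
      - a₁ x * pdR 1 (fun y => ‖u y‖ ^ 2) x) :=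
    ((integrable_mul_pdR_sq_norm ha₂.continuous hu1 hc 0).sub
      (integrable_mul_pdR_sq_norm ha₁.continuous hu1 hc 1)).const_mul h
  have hIm : Integrable fun x => 2 * h ^ 2 * (conj (pdC 0 u x) * pdC 1 u x).im :=
    integrable_of_forall_notMem_tsupport (by fun_prop) hc fun x hx => by
      simp [pdC_of_notMem_tsupport hx]
  simp only [sq_norm_magneticDbar (hu1.differentiable one_ne_zero _), pauliQ, setIntegral_univ]
  rw [integral_sub (hD.fun_add hdiv) hIm, integral_add hD hdiv, integral_const_mul,
    integral_const_mul, integral_im_conj_pdC_mul_pdC hu hc,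
    integral_mul_pdR_sub_mul_pdR_sq_norm ha₁ ha₂ hu1 hc]
  ring

end MagneticCauchyRiemann

section TestFunctions

variable {Ω : Set E2} {u v : E2 → ℂ}

namespace IsCptSmoothIn

lemma contDiff (hu : IsCptSmoothIn Ω u) : ContDiff ℝ (⊤ : ℕ∞) u := hu.1

lemma hasCompactSupport (hu : IsCptSmoothIn Ω u) : HasCompactSupport u := hu.2.1

lemma tsupport_subset (hu : IsCptSmoothIn Ω u) : tsupport u ⊆ Ω := hu.2.2

lemma contDiff_nat (hu : IsCptSmoothIn Ω u) (n : ℕ) : ContDiff ℝ n u :=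
  hu.contDiff.of_le (by exact_mod_cast le_top)

lemma mem_of_ne_zero (hu : IsCptSmoothIn Ω u) {x : E2} (hx : u x ≠ 0) : x ∈ Ω :=
  hu.tsupport_subset (subset_tsupport u hx)

lemma smooth_mul (hu : IsCptSmoothIn Ω u) {f : E2 → ℂ} (hf : ContDiff ℝ (⊤ : ℕ∞) f) :
    IsCptSmoothIn Ω fun x => f x * u x :=
  ⟨hf.mul hu.contDiff, hu.hasCompactSupport.mul_left,
    (closure_mono (Function.support_mul_subset_right f u)).trans hu.tsupport_subset⟩

lemma integrable_sq_norm (hu : IsCptSmoothIn Ω u) : Integrable fun x => ‖u x‖ ^ 2 := by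
  simpa only [one_mul] using integrable_mul_sq_norm (continuous_const (y := (1 : ℝ)))
    hu.contDiff.continuous hu.hasCompactSupport

lemma setIntegral_sq_norm (hu : IsCptSmoothIn Ω u) : ∫ x in Ω, ‖u x‖ ^ 2 = ∫ x, ‖u x‖ ^ 2 :=
  setIntegral_eq_integral_of_forall_compl_eq_zero fun x hx => by
    rw [of_not_not (mt hu.mem_of_ne_zero hx), norm_zero, zero_pow two_ne_zero]

lemma setIntegral_sq_norm_pos (hu : IsCptSmoothIn Ω u) (hu0 : u ≠ 0) :
    0 < ∫ x in Ω, ‖u x‖ ^ 2 := by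
  obtain ⟨x, hx⟩ := Function.ne_iff.mp hu0
  rw [hu.setIntegral_sq_norm, integral_pos_iff_support_of_nonneg (fun x => by positivity)
    hu.integrable_sq_norm]
  have := hu.contDiff.continuous
  exact (by fun_prop : Continuous fun x => ‖u x‖ ^ 2).isOpen_support.measure_pos _
    ⟨x, by simpa using hx⟩

/-- Only the values and first derivatives of the vector potential on `Ω` enter the Pauli form. -/
lemma pauliQ_eq_pauliQ_univ (hu : IsCptSmoothIn Ω u) {A₁ A₂ a₁ a₂ : E2 → ℝ}
    (h₁ : ∀ x ∈ Ω, a₁ =ᶠ[𝓝 x] A₁) (h₂ : ∀ x ∈ Ω, a₂ =ᶠ[𝓝 x] A₂) (h : ℝ) :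
    pauliQ Ω A₁ A₂ (fun x => pdR 0 A₂ x - pdR 1 A₁ x) h u
      = pauliQ Set.univ a₁ a₂ (fun x => pdR 0 a₂ x - pdR 1 a₁ x) h u := by
  have hzero {x : E2} (hx : x ∉ Ω) : u x = 0 ∧ ∀ i, pdC i u x = 0 :=
    have hx' : x ∉ tsupport u := fun hxu => hx (hu.tsupport_subset hxu)
    ⟨image_eq_zero_of_notMem_tsupport hx', pdC_of_notMem_tsupport hx'⟩
  rw [pauliQ, pauliQ, setIntegral_univ, setIntegral_univ,
    setIntegral_eq_integral_of_forall_compl_eq_zero fun x hx => by simp [hzero hx],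
    setIntegral_eq_integral_of_forall_compl_eq_zero fun x hx => by simp [hzero hx]]
  refine congrArg₂ (· - ·) (integral_congr_ae (.of_forall fun x => ?_))
    (congrArg (h * ·) (integral_congr_ae (.of_forall fun x => ?_))) <;> by_cases hx : x ∈ Ω
  · simp only [(h₁ x hx).eq_of_nhds, (h₂ x hx).eq_of_nhds]
  · simp [hzero hx]
  · simp only [pdR, (h₁ x hx).fderiv_eq, (h₂ x hx).fderiv_eq]
  · simp [hzero hx]

lemma pauliQ_eq_integral_sq_norm_magneticDbar (hu : IsCptSmoothIn Ω u) {A₁ A₂ a₁ a₂ : E2 → ℝ}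
    (ha₁ : ContDiff ℝ 1 a₁) (ha₂ : ContDiff ℝ 1 a₂) (h₁ : ∀ x ∈ Ω, a₁ =ᶠ[𝓝 x] A₁)
    (h₂ : ∀ x ∈ Ω, a₂ =ᶠ[𝓝 x] A₂) (h : ℝ) :
    pauliQ Ω A₁ A₂ (fun x => pdR 0 A₂ x - pdR 1 A₁ x) h u
      = ∫ x, ‖magneticDbar a₁ a₂ h u x‖ ^ 2 := by
  rw [hu.pauliQ_eq_pauliQ_univ h₁ h₂, pauliQ_univ_eq_integral_sq_norm_magneticDbar ha₁ ha₂ h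
    (hu.contDiff_nat 2) hu.hasCompactSupport]

lemma setIntegral_sq_norm_pdC (hv : IsCptSmoothIn Ω v) :
    ∫ x in Ω, (‖pdC 0 v x‖ ^ 2 + ‖pdC 1 v x‖ ^ 2) = ∫ x, ‖dbarE2 v x‖ ^ 2 := by
  simpa [pauliQ, magneticDbar, pdR] using hv.pauliQ_eq_integral_sq_norm_magneticDbar
    (A₁ := 0) (A₂ := 0) contDiff_zero_fun contDiff_zero_fun (fun _ _ => .rfl) (fun _ _ => .rfl) 1

end IsCptSmoothIn

lemma exists_isCptSmoothIn_ne_zero (hΩo : IsOpen Ω) (hΩne : Ω.Nonempty) :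
    ∃ u : E2 → ℂ, IsCptSmoothIn Ω u ∧ u ≠ 0 := by
  obtain ⟨x, hx⟩ := hΩne
  obtain ⟨φ, hφΩ, hφc, hφ, -, hφx⟩ := exists_contDiff_tsupport_subset (n := ⊤) (hΩo.mem_nhds hx)
  refine ⟨fun y => φ y, ⟨Complex.ofRealCLM.contDiff.comp hφ, ?_, ?_⟩, ?_⟩
  · exact hφc.comp_left Complex.ofReal_zero
  · exact (tsupport_comp_subset Complex.ofReal_zero φ).trans hφΩ
  · exact Function.ne_iff.mpr ⟨x, by simp [hφx]⟩

end TestFunctions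

section Eigenvalues

variable {Ω : Set E2}

lemma lambdaD_nonneg (Ω : Set E2) : 0 ≤ lambdaD Ω := by
  refine Real.sInf_nonneg ?_
  rintro _ ⟨v, -, -, rfl⟩
  positivity

lemma lambdaD_mul_integral_sq_norm_le {v : E2 → ℂ} (hv : IsCptSmoothIn Ω v) :
    lambdaD Ω * ∫ x, ‖v x‖ ^ 2 ≤ ∫ x, ‖dbarE2 v x‖ ^ 2 := by
  rcases eq_or_ne v 0 with rfl | hv0
  · simpa using integral_nonneg fun x => sq_nonneg ‖dbarE2 0 x‖
  rw [← hv.setIntegral_sq_norm_pdC, ← hv.setIntegral_sq_norm,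
    ← le_div_iff₀ (hv.setIntegral_sq_norm_pos hv0)]
  refine csInf_le ⟨0, ?_⟩ ⟨v, hv, hv0, rfl⟩
  rintro _ ⟨v, -, -, rfl⟩
  positivity

lemma le_lambdaP (hΩo : IsOpen Ω) (hΩne : Ω.Nonempty) {A₁ A₂ B : E2 → ℝ} {h c : ℝ}
    (hc : ∀ u, IsCptSmoothIn Ω u → c * ∫ x, ‖u x‖ ^ 2 ≤ pauliQ Ω A₁ A₂ B h u) :
    c ≤ lambdaP Ω A₁ A₂ B h := by
  obtain ⟨u₀, hu₀, hu₀0⟩ := exists_isCptSmoothIn_ne_zero hΩo hΩne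
  refine le_csInf ⟨_, u₀, hu₀, hu₀0, rfl⟩ ?_
  rintro _ ⟨u, hu, hu0, rfl⟩
  rw [le_div_iff₀ (hu.setIntegral_sq_norm_pos hu0), hu.setIntegral_sq_norm]
  exact hc u hu

end Eigenvalues

section LowerBound

open Complex

lemma exp_two_mul_mul_integral_sq_norm_le {X : Type*} [MeasurableSpace X] {μ : Measure X}
    {f w : X → ℂ} {m : ℝ} (hm : ∀ x, w x ≠ 0 → m ≤ (f x).re)
    (hw : Integrable (fun x => ‖w x‖ ^ 2) μ)
    (hfw : Integrable (fun x => ‖exp (f x) * w x‖ ^ 2) μ) :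
    Real.exp (2 * m) * ∫ x, ‖w x‖ ^ 2 ∂μ ≤ ∫ x, ‖exp (f x) * w x‖ ^ 2 ∂μ := by
  rw [← integral_const_mul]
  refine integral_mono (hw.const_mul _) hfw fun x => ?_
  rcases eq_or_ne (w x) 0 with hwx | hwx
  · simp [hwx]
  have hexp : Real.exp (2 * m) ≤ ‖exp (f x)‖ ^ 2 := by
    rw [norm_exp, ← Real.exp_nat_mul]
    exact Real.exp_le_exp.mpr (mul_le_mul_of_nonneg_left (hm x hwx) zero_le_two)
  simpa only [norm_mul, mul_pow] using mul_le_mul_of_nonneg_right hexp (sq_nonneg ‖w x‖)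

variable {Ω : Set E2} {a₁ a₂ : E2 → ℝ} {f u v : E2 → ℂ} {h m M : ℝ}

lemma exp_two_mul_mul_integral_sq_norm_dbarE2_le (ha₁ : Continuous a₁) (ha₂ : Continuous a₂)
    (hf : ContDiff ℝ (⊤ : ℕ∞) f) (hfa : ∀ x, h * dbarE2 f x = I * (a₁ x + I * a₂ x))
    (hm : ∀ x ∈ Ω, m ≤ (f x).re) (hv : IsCptSmoothIn Ω v) :
    Real.exp (2 * m) * (h ^ 2 * ∫ x, ‖dbarE2 v x‖ ^ 2)
      ≤ ∫ x, ‖magneticDbar a₁ a₂ h (fun y => exp (f y) * v y) x‖ ^ 2 := by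
  have hu : IsCptSmoothIn Ω fun x => exp (f x) * v x := hv.smooth_mul hf.cexp
  have hD (x : E2) :
      magneticDbar a₁ a₂ h (fun y => exp (f y) * v y) x = exp (f x) * (h * dbarE2 v x) :=
    magneticDbar_exp_mul (hf.differentiable (by simp) x)
      (hv.contDiff.differentiable (by simp) x) (hfa x)
  have hscale : ∫ x, ‖(h : ℂ) * dbarE2 v x‖ ^ 2 = h ^ 2 * ∫ x, ‖dbarE2 v x‖ ^ 2 := by
    simp only [norm_mul, mul_pow, norm_real, Real.norm_eq_abs, sq_abs, integral_const_mul]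
  rw [← hscale]
  simp only [hD]
  refine exp_two_mul_mul_integral_sq_norm_le (fun x hx => hm x (hv.tsupport_subset ?_)) ?_ ?_
  · contrapose! hx
    simp [dbarE2, pdC_of_notMem_tsupport hx]
  · simpa [magneticDbar] using integrable_sq_norm_magneticDbar (h := h) (a₁ := 0) (a₂ := 0)
      continuous_zero continuous_zero (hv.contDiff_nat 1) hv.hasCompactSupport
  · simpa only [hD] using integrable_sq_norm_magneticDbar (h := h) ha₁ ha₂ (hu.contDiff_nat 1)
      hu.hasCompactSupport

/-- Writing `u = e^f v`, the bound is inherited from the Dirichlet Laplacian applied to `v`. -/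
lemma lambdaD_mul_exp_mul_integral_sq_norm_le (ha₁ : Continuous a₁) (ha₂ : Continuous a₂)
    (hf : ContDiff ℝ (⊤ : ℕ∞) f) (hfa : ∀ x, h * dbarE2 f x = I * (a₁ x + I * a₂ x))
    (hm : ∀ x ∈ Ω, m ≤ (f x).re) (hM : ∀ x ∈ Ω, (f x).re ≤ M) (hu : IsCptSmoothIn Ω u) :
    lambdaD Ω * h ^ 2 * Real.exp (-(2 * (M - m))) * ∫ x, ‖u x‖ ^ 2
      ≤ ∫ x, ‖magneticDbar a₁ a₂ h u x‖ ^ 2 := by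
  let v : E2 → ℂ := fun x => exp (-f x) * u x
  have hv : IsCptSmoothIn Ω v := hu.smooth_mul hf.neg.cexp
  have huv : u = fun x => exp (f x) * v x := by
    ext x
    rw [← mul_assoc, ← exp_add, add_neg_cancel, exp_zero, one_mul]
  have hvu : Real.exp (-(2 * M)) * ∫ x, ‖u x‖ ^ 2 ≤ ∫ x, ‖v x‖ ^ 2 := by
    rw [← mul_neg]
    exact exp_two_mul_mul_integral_sq_norm_le
      (fun x hx => neg_le_neg (hM x (hu.mem_of_ne_zero hx))) hu.integrable_sq_norm
      hv.integrable_sq_norm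
  calc lambdaD Ω * h ^ 2 * Real.exp (-(2 * (M - m))) * ∫ x, ‖u x‖ ^ 2
      = Real.exp (2 * m) * (h ^ 2 * (lambdaD Ω * (Real.exp (-(2 * M)) * ∫ x, ‖u x‖ ^ 2))) := by
        rw [show -(2 * (M - m)) = 2 * m + -(2 * M) by ring, Real.exp_add]
        ring
    _ ≤ Real.exp (2 * m) * (h ^ 2 * (lambdaD Ω * ∫ x, ‖v x‖ ^ 2)) := by
        gcongr
        exact lambdaD_nonneg Ω
    _ ≤ Real.exp (2 * m) * (h ^ 2 * ∫ x, ‖dbarE2 v x‖ ^ 2) := by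
        gcongr
        exact lambdaD_mul_integral_sq_norm_le hv
    _ ≤ ∫ x, ‖magneticDbar a₁ a₂ h u x‖ ^ 2 := by
        rw [huv]
        exact exp_two_mul_mul_integral_sq_norm_dbarE2_le ha₁ ha₂ hf hfa hm hv

end LowerBound

open Complex in
lemma exists_contDiff_eventuallyEq_dbarE2_eq {Ω U : Set E2} (hΩb : Bornology.IsBounded Ω)
    (hU : IsOpen U) (hclU : closure Ω ⊆ U) {n : ℕ∞} (hn : 1 ≤ n)
    {A₁ A₂ : E2 → ℝ} (hA₁ : ContDiffOn ℝ n A₁ U) (hA₂ : ContDiffOn ℝ n A₂ U) :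
    ∃ (a₁ a₂ : E2 → ℝ) (g : E2 → ℂ), ContDiff ℝ n a₁ ∧ ContDiff ℝ n a₂ ∧ ContDiff ℝ n g ∧
      (∀ x ∈ Ω, a₁ =ᶠ[𝓝 x] A₁) ∧ (∀ x ∈ Ω, a₂ =ᶠ[𝓝 x] A₂) ∧
      ∀ x, dbarE2 g x = I * (a₁ x + I * a₂ x) := by
  obtain ⟨a₁, ha₁, hc₁, h₁⟩ :=
    exists_contDiff_hasCompactSupport_eventuallyEq hΩb.isCompact_closure hU hclU hA₁
  obtain ⟨a₂, ha₂, hc₂, h₂⟩ :=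
    exists_contDiff_hasCompactSupport_eventuallyEq hΩb.isCompact_closure hU hclU hA₂
  have hα : ContDiff ℝ n fun x => I * (a₁ x + I * a₂ x : ℂ) :=
    contDiff_const.mul ((ofRealCLM.contDiff.comp ha₁).add
      (contDiff_const.mul (ofRealCLM.contDiff.comp ha₂)))
  have hαc : HasCompactSupport fun x => I * (a₁ x + I * a₂ x : ℂ) :=
    ((hc₁.comp_left ofReal_zero).add (hc₂.comp_left ofReal_zero).mul_left).mul_left
  obtain ⟨g, hg, hgα⟩ := exists_contDiff_dbarE2_eq hn hα hαc
  have hnhds {x : E2} (hx : x ∈ Ω) : 𝓝 x ≤ 𝓝ˢ (closure Ω) := nhds_le_nhdsSet (subset_closure hx)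
  exact ⟨a₁, a₂, g, ha₁, ha₂, hg, fun x hx => h₁.filter_mono (hnhds hx),
    fun x hx => h₂.filter_mono (hnhds hx), hgα⟩

theorem stmt3_general (Ω : Set E2) (hΩo : IsOpen Ω) (hΩne : Ω.Nonempty)
    (hΩb : Bornology.IsBounded Ω)
    (U : Set E2) (hU : IsOpen U) (hclU : closure Ω ⊆ U)
    (A₁ A₂ : E2 → ℝ) (hA₁ : ContDiffOn ℝ (⊤ : ℕ∞) A₁ U) (hA₂ : ContDiffOn ℝ (⊤ : ℕ∞) A₂ U)
    (B : E2 → ℝ) (hB : B = fun x => pdR 0 A₂ x - pdR 1 A₁ x) :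
    ∃ ε > 0, ∀ h : ℝ, 0 < h →
      lambdaP Ω A₁ A₂ B h ≥ lambdaD Ω * h ^ 2 * Real.exp (-ε / h) := by
  subst hB
  obtain ⟨a₁, a₂, g, ha₁, ha₂, hg, h₁, h₂, hga⟩ :=
    exists_contDiff_eventuallyEq_dbarE2_eq hΩb hU hclU le_top hA₁ hA₂
  obtain ⟨C, hC0, hC⟩ := (hΩb.isCompact_closure.image hg.continuous).isBounded.exists_pos_norm_le
  have hre (x : E2) (hx : x ∈ Ω) : |(g x).re| ≤ C :=
    (Complex.abs_re_le_norm _).trans (hC _ (Set.mem_image_of_mem g (subset_closure hx)))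
  refine ⟨4 * C, by positivity, fun h hh => le_lambdaP hΩo hΩne fun u hu => ?_⟩
  have hga' (x : E2) :
      h * dbarE2 (fun y => g y / h) x = Complex.I * (a₁ x + Complex.I * a₂ x) := by
    rw [dbarE2_div_const, hga, mul_div_cancel₀ _ (by exact_mod_cast hh.ne')]
  rw [hu.pauliQ_eq_integral_sq_norm_magneticDbar (ha₁.of_le (by simp)) (ha₂.of_le (by simp)) h₁ h₂,
    show -(4 * C) / h = -(2 * (C / h - -C / h)) by ring]
  refine lambdaD_mul_exp_mul_integral_sq_norm_le ha₁.continuous ha₂.continuous (hg.div_const _)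
    hga' (fun x hx => ?_) (fun x hx => ?_) hu <;> rw [Complex.div_ofReal_re]
  · gcongr
    exact neg_le_of_abs_le (hre x hx)
  · gcongr
    exact le_of_abs_le (hre x hx)

/-- Ekholm--Kovařík--Portmann: for a simply connected bounded open `Ω` and a
magnetic field not vanishing identically, there is `ε > 0` with
`λ_{P₋}(h) ≥ λ^D(Ω) h² exp(−ε/h)` for all `h > 0`. -/
theorem stmt3 (Ω : Set E2) (hΩo : IsOpen Ω) (hΩne : Ω.Nonempty)
    (hΩb : Bornology.IsBounded Ω)
    (hsc : SimplyConnectedSpace Ω)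
    (U : Set E2) (hU : IsOpen U) (hclU : closure Ω ⊆ U)
    (A₁ A₂ : E2 → ℝ) (hA₁ : ContDiffOn ℝ (⊤ : ℕ∞) A₁ U) (hA₂ : ContDiffOn ℝ (⊤ : ℕ∞) A₂ U)
    (B : E2 → ℝ) (hB : B = fun x => pdR 0 A₂ x - pdR 1 A₁ x)
    (hBne : ∃ x ∈ Ω, B x ≠ 0) :
    ∃ ε > 0, ∀ h : ℝ, 0 < h →
      lambdaP Ω A₁ A₂ B h ≥ lambdaD Ω * h ^ 2 * Real.exp (-ε / h) :=
  stmt3_general Ω hΩo hΩne hΩb U hU hclU A₁ A₂ hA₁ hA₂ B hB
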